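/- For real $\nu\ge 0$ and $z\ge 0$ let $J_\nu(z)=\sum_{m=0}^\infty \frac{(-1)^m}{m!\,\Gamma(\nu+m+1)}\left(\frac z2\right)^{\nu+2m}$ be the Bessel function of the first kind of order $\nu$, and let $J_\nu'$ be its derivative with respect to $z$. For $\nu>0$ let $j'_{\nu,1}<j'_{\nu,2}<\cdots$ be the positive zeroes of $J_\nu'$ in increasing order; for $\nu=0$ let $j'_{0,1}<j'_{0,2}<\cdots$ be the nonnegative zeroes of $J_0'$ in increasing order, so that, by the usual convention, the zero $z=0$ is counted as $j'_{0,1}=0$. Let $\nu$ be a real number with $\nu\ge 1$. For every integer $k\ge 1$ one has $$j'_{\nu,k+1}<j'_{\nu-1,k+2}<j'_{\nu,k+2};$$ that is, the zeroes of the derivatives $J_{\nu-1}'$ and $J_\nu'$ of Bessel functions of the first kind of consecutive orders are interlaced in the same way as the positive zeroes of the Bessel functions themselves. -/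

import Mathlib

/-- Bessel function of the first kind of real order `ν`, defined via its power series
`J_ν(z) = ∑ₘ (−1)^m / (m! Γ(ν+m+1)) (z/2)^(ν+2m)` (with real-exponent powers). -/
noncomputable def besselJ (ν z : ℝ) : ℝ :=
  ∑' m : ℕ, ((-1 : ℝ) ^ m / (Nat.factorial m * Real.Gamma (ν + m + 1))) *
    (z / 2) ^ (ν + 2 * (m : ℝ))

/-- The zeroes of `J_ν′` that are counted by the sequence `j′_{ν,1} < j′_{ν,2} < ⋯`: the
positive ones and, for the order `ν = 0` only, also the zero `z = 0` of `J_0′`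
(the usual convention `j′_{0,1} = 0`). -/
def besselJDerivZeros (ν : ℝ) : Set ℝ :=
  {z : ℝ | (0 < z ∨ (ν = 0 ∧ z = 0)) ∧ deriv (besselJ ν) z = 0}

/-- `x` (indexed by `k ≥ 1`; the value `x 0` is irrelevant) is the sequence `k ↦ j′_{ν,k}`:
it is strictly increasing on the indices `k ≥ 1` and its values there are exactly the elements
of `besselJDerivZeros ν`. -/
def EnumBesselJDerivZeros (ν : ℝ) (x : ℕ → ℝ) : Prop :=
  StrictMonoOn x (Set.Ici 1) ∧ (∀ k, 1 ≤ k → x k ∈ besselJDerivZeros ν) ∧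
    ∀ z ∈ besselJDerivZeros ν, ∃ k, 1 ≤ k ∧ x k = z

open Filter Topology Set

/-! ### Sign changes of differentiable functions -/

theorem pos_or_neg_of_ne_zero {f : ℝ → ℝ} {s : Set ℝ} (hs : IsPreconnected s)
    (hf : ContinuousOn f s) (h0 : ∀ z ∈ s, f z ≠ 0) :
    (∀ z ∈ s, 0 < f z) ∨ (∀ z ∈ s, f z < 0) := by
  by_contra! h
  obtain ⟨⟨x, hx, hfx⟩, y, hy, hfy⟩ := h
  obtain ⟨z, hz, hfz⟩ := hs.intermediate_value hx hy hf ⟨hfx, hfy⟩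
  exact h0 z hz hfz

theorem HasDerivAt.nonneg_of_pos_right {f : ℝ → ℝ} {p q d : ℝ} (hpq : p < q) (hd : HasDerivAt f d p)
    (hp : f p = 0) (h : ∀ z ∈ Ioo p q, 0 < f z) : 0 ≤ d := by
  have ht : Tendsto (slope f p) (𝓝[>] p) (𝓝 d) :=
    hd.tendsto_slope.mono_left (nhdsWithin_mono p (fun x (hx : p < x) => hx.ne'))
  refine ge_of_tendsto ht ?_
  filter_upwards [Ioo_mem_nhdsGT hpq] with x hx
  rw [slope_def_field, hp, sub_zero]
  exact div_nonneg (h x hx).le (sub_nonneg.2 hx.1.le)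

theorem HasDerivAt.nonpos_of_pos_left {f : ℝ → ℝ} {p q d : ℝ} (hpq : p < q) (hd : HasDerivAt f d q)
    (hq : f q = 0) (h : ∀ z ∈ Ioo p q, 0 < f z) : d ≤ 0 := by
  have ht : Tendsto (slope f q) (𝓝[<] q) (𝓝 d) :=
    hd.tendsto_slope.mono_left (nhdsWithin_mono q (fun x (hx : x < q) => hx.ne))
  refine le_of_tendsto ht ?_
  filter_upwards [Ioo_mem_nhdsLT hpq] with x hx
  rw [slope_def_field, hq, sub_zero]
  exact div_nonpos_of_nonneg_of_nonpos (h x hx).le (sub_nonpos.2 hx.2.le)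

/-- If `f` vanishes at `p < q` but not in between, and `f' g` is negative at both ends, then `g`
vanishes in between. -/
theorem exists_zero_between_of_deriv_mul_neg {f g : ℝ → ℝ} {p q d e : ℝ} (hpq : p < q)
    (hf : ContinuousOn f (Icc p q)) (hg : ContinuousOn g (Icc p q))
    (hd : HasDerivAt f d p) (he : HasDerivAt f e q) (hp : f p = 0) (hq : f q = 0)
    (h0 : ∀ z ∈ Ioo p q, f z ≠ 0) (hdp : d * g p < 0) (heq : e * g q < 0) :
    ∃ z ∈ Ioo p q, g z = 0 := by
  rcases pos_or_neg_of_ne_zero isPreconnected_Ioo (hf.mono Ioo_subset_Icc_self) h0 with h | h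
  · have h1 : 0 ≤ d := hd.nonneg_of_pos_right hpq hp h
    have h2 : e ≤ 0 := he.nonpos_of_pos_left hpq hq h
    have h3 : g p < 0 := by by_contra! hc; nlinarith
    have h4 : 0 < g q := by by_contra! hc; nlinarith
    exact intermediate_value_Ioo hpq.le hg ⟨h3, h4⟩
  · have h' : ∀ z ∈ Ioo p q, 0 < (-f) z := fun z hz => neg_pos.2 (h z hz)
    have h1 : 0 ≤ -d := hd.neg.nonneg_of_pos_right hpq (by simp [hp]) h'
    have h2 : -e ≤ 0 := he.neg.nonpos_of_pos_left hpq (by simp [hq]) h'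
    have h3 : 0 < g p := by by_contra! hc; nlinarith
    have h4 : g q < 0 := by by_contra! hc; nlinarith
    exact intermediate_value_Ioo' hpq.le hg ⟨h4, h3⟩

/-! ### The entire factor of the Bessel function -/

/-- The coefficients of the entire function `x ↦ ∑ₘ (-1)^m x^m / (m! Γ(ν+m+1))`. -/
noncomputable def besselCoeff (ν : ℝ) (m : ℕ) : ℝ :=
  (-1 : ℝ) ^ m / (Nat.factorial m * Real.Gamma (ν + m + 1))

/-- The entire function `h_ν` with `J_ν(z) = (z/2)^ν h_ν((z/2)^2)`. -/
noncomputable def besselEntire (ν x : ℝ) : ℝ := ∑' m : ℕ, besselCoeff ν m * x ^ m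

theorem Gamma_le_Gamma_add_nat {ν : ℝ} (hν : 0 ≤ ν) (m : ℕ) :
    Real.Gamma (ν + 1) ≤ Real.Gamma (ν + m + 1) := by
  induction m with
  | zero => simp
  | succ m ih =>
    have h1 : (0 : ℝ) < Real.Gamma (ν + m + 1) := Real.Gamma_pos_of_pos (by positivity)
    have : Real.Gamma (ν + (m + 1 : ℕ) + 1) = (ν + m + 1) * Real.Gamma (ν + m + 1) := by
      rw [← Real.Gamma_add_one (by positivity)]; push_cast; ring_nf
    rw [this]
    have : (0 : ℝ) ≤ m := Nat.cast_nonneg m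
    nlinarith

theorem abs_besselCoeff_le {ν : ℝ} (hν : 0 ≤ ν) (m : ℕ) :
    |besselCoeff ν m| ≤ (Real.Gamma (ν + 1))⁻¹ / Nat.factorial m := by
  have h0 : 0 < Real.Gamma (ν + 1) := Real.Gamma_pos_of_pos (by positivity)
  have h1 := Gamma_le_Gamma_add_nat hν m
  have hm : (0 : ℝ) < Nat.factorial m := by positivity
  rw [besselCoeff, abs_div, abs_pow, abs_neg, abs_one, one_pow, abs_mul, abs_of_pos hm,
    abs_of_pos (h0.trans_le h1), inv_eq_one_div, div_div, mul_comm]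
  gcongr

theorem summable_besselEntire {ν : ℝ} (hν : 0 ≤ ν) (x : ℝ) :
    Summable fun m : ℕ => besselCoeff ν m * x ^ m := by
  refine Summable.of_norm_bounded
    ((Real.summable_pow_div_factorial |x|).mul_left (Real.Gamma (ν + 1))⁻¹) fun m => ?_
  rw [Real.norm_eq_abs, abs_mul, abs_pow]
  calc _ ≤ (Real.Gamma (ν + 1))⁻¹ / Nat.factorial m * |x| ^ m := by
        gcongr; exact abs_besselCoeff_le hν m
    _ = _ := by ring

theorem besselCoeff_succ_mul (ν : ℝ) (m : ℕ) :
    besselCoeff ν (m + 1) * (m + 1 : ℕ) = -besselCoeff (ν + 1) m := by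
  have hm : (Nat.factorial m : ℝ) ≠ 0 := by positivity
  have hm1 : (m + 1 : ℝ) ≠ 0 := by positivity
  have hG : ν + (m + 1 : ℕ) + 1 = ν + 1 + m + 1 := by push_cast; ring
  rw [besselCoeff, besselCoeff, hG, Nat.factorial_succ, pow_succ]
  push_cast
  by_cases h : Real.Gamma (ν + 1 + m + 1) = 0
  · simp [h]
  · field_simp

theorem besselCoeff_eq_mul {ν : ℝ} (hν : 0 ≤ ν) (m : ℕ) :
    besselCoeff ν m = (ν + 1 + m) * besselCoeff (ν + 1) m := by
  have hG : Real.Gamma (ν + 1 + m + 1) = (ν + 1 + m) * Real.Gamma (ν + m + 1) := by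
    rw [Real.Gamma_add_one (by positivity)]; congr 2; ring
  have h1 : (ν + 1 + m) ≠ 0 := by positivity
  have hm : (Nat.factorial m : ℝ) ≠ 0 := by positivity
  have h2 : Real.Gamma (ν + m + 1) ≠ 0 := (Real.Gamma_pos_of_pos (by positivity)).ne'
  rw [besselCoeff, besselCoeff, hG]
  field_simp

theorem hasDerivAt_besselEntire {ν : ℝ} (hν : 0 ≤ ν) (x : ℝ) :
    HasDerivAt (besselEntire ν) (-besselEntire (ν + 1) x) x := by
  set R : ℝ := |x| + 1 with hR
  have hRpos : 0 < R := by positivity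
  have hterm (m : ℕ) (y : ℝ) :
      besselCoeff ν (m + 1) * ((m + 1 : ℕ) * y ^ m) = -(besselCoeff (ν + 1) m * y ^ m) := by
    rw [← mul_assoc, besselCoeff_succ_mul]; ring
  have hu : Summable fun m : ℕ => |besselCoeff ν m| * (m * R ^ (m - 1)) := by
    rw [← summable_nat_add_iff 1]
    refine ((summable_besselEntire (by positivity : 0 ≤ ν + 1) R).abs).congr fun m => ?_
    have := congrArg abs (hterm m R)
    rw [abs_neg, abs_mul, abs_of_nonneg (by positivity : (0 : ℝ) ≤ (m + 1 : ℕ) * R ^ m)] at this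
    simpa using this.symm
  have key := hasDerivAt_tsum_of_isPreconnected (𝕜 := ℝ) (F := ℝ)
    (g := fun m y => besselCoeff ν m * y ^ m)
    (g' := fun m y => besselCoeff ν m * (m * y ^ (m - 1)))
    (t := Metric.ball 0 R) (y₀ := x) (y := x) hu Metric.isOpen_ball
    (convex_ball (0 : ℝ) R).isPreconnected
    (fun m y _ => (hasDerivAt_pow m y).const_mul _)
    (fun m y hy => by
      have hy' : |y| ≤ R := by simpa using (mem_ball_zero_iff.1 hy).le
      rw [Real.norm_eq_abs, abs_mul, abs_mul, abs_pow, Nat.abs_cast]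
      gcongr)
    (by simp [hR]) (summable_besselEntire hν x) (by simp [hR])
  have hsum : Summable fun m : ℕ => besselCoeff ν m * (m * x ^ (m - 1)) := by
    rw [← summable_nat_add_iff 1]
    refine (summable_besselEntire (by positivity : 0 ≤ ν + 1) x).neg.congr fun m => ?_
    simpa using (hterm m x).symm
  refine HasDerivAt.congr_deriv key ?_
  rw [hsum.tsum_eq_zero_add, besselEntire, ← tsum_neg]
  simp only [Nat.cast_zero, zero_mul, mul_zero, zero_add, Nat.add_sub_cancel]
  exact tsum_congr fun m => hterm m x

theorem besselEntire_recurrence {ν : ℝ} (hν : 0 ≤ ν) (x : ℝ) :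
    besselEntire ν x = (ν + 1) * besselEntire (ν + 1) x - x * besselEntire (ν + 2) x := by
  have h1 := (summable_besselEntire (by positivity : 0 ≤ ν + 1) x)
  have h2 := (summable_besselEntire (by positivity : 0 ≤ ν + 2) x)
  have hterm (m : ℕ) : besselCoeff (ν + 1) (m + 1) * (m + 1 : ℕ) * x ^ (m + 1)
      = -x * (besselCoeff (ν + 2) m * x ^ m) := by
    rw [besselCoeff_succ_mul, show ν + 1 + 1 = ν + 2 by ring]; ring
  have h3 : Summable fun m : ℕ => besselCoeff (ν + 1) m * m * x ^ m := by
    rw [← summable_nat_add_iff 1]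
    exact (h2.mul_left (-x)).congr fun m => (hterm m).symm
  have h4 : ∑' m : ℕ, besselCoeff (ν + 1) m * m * x ^ m = -x * besselEntire (ν + 2) x := by
    rw [h3.tsum_eq_zero_add, besselEntire, ← tsum_mul_left]
    simpa using tsum_congr hterm
  have h5 : besselEntire ν x = ∑' m : ℕ, ((ν + 1) * (besselCoeff (ν + 1) m * x ^ m)
      + besselCoeff (ν + 1) m * m * x ^ m) :=
    tsum_congr fun m => by rw [besselCoeff_eq_mul hν]; ring
  rw [h5, (h1.mul_left _).tsum_add h3, h4, tsum_mul_left, besselEntire, besselEntire]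
  ring

theorem continuous_besselEntire {ν : ℝ} (hν : 0 ≤ ν) : Continuous (besselEntire ν) :=
  continuous_iff_continuousAt.2 fun x => (hasDerivAt_besselEntire hν x).continuousAt

theorem besselEntire_zero_pos {ν : ℝ} (hν : 0 ≤ ν) : 0 < besselEntire ν 0 := by
  have : besselEntire ν 0 = besselCoeff ν 0 := by
    rw [besselEntire, tsum_eq_single 0 (fun m hm => by simp [hm])]; simp
  rw [this, besselCoeff]
  have : 0 < Real.Gamma (ν + (0 : ℕ) + 1) := Real.Gamma_pos_of_pos (by simpa using by positivity)
  positivity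

/-! ### Recurrences for the Bessel function -/

theorem besselJ_eq_rpow_mul (ν : ℝ) {z : ℝ} (hz : 0 < z) :
    besselJ ν z = (z / 2) ^ ν * besselEntire ν ((z / 2) ^ 2) := by
  rw [besselJ, besselEntire, ← tsum_mul_left]
  refine tsum_congr fun m => ?_
  rw [Real.rpow_add (by positivity), show 2 * (m : ℝ) = ((2 * m : ℕ) : ℝ) by push_cast; ring,
    Real.rpow_natCast, pow_mul, besselCoeff]
  ring

theorem besselJ_zero_eq (z : ℝ) : besselJ 0 z = besselEntire 0 ((z / 2) ^ 2) := by
  rw [besselJ, besselEntire]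
  refine tsum_congr fun m => ?_
  rw [show 0 + 2 * (m : ℝ) = ((2 * m : ℕ) : ℝ) by push_cast; ring,
    Real.rpow_natCast, pow_mul, besselCoeff]

theorem deriv_besselJ_zero_zero : deriv (besselJ 0) 0 = 0 := by
  have h : besselJ 0 = fun z => besselEntire 0 ((z / 2) ^ 2) := funext besselJ_zero_eq
  have h1 : HasDerivAt (fun z : ℝ => (z / 2) ^ 2) 0 0 := by
    exact (((hasDerivAt_id (0 : ℝ)).div_const 2).pow 2).congr_deriv (by simp)
  rw [h]
  exact (((hasDerivAt_besselEntire le_rfl _).comp (0 : ℝ) h1).congr_deriv (mul_zero _)).deriv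

theorem hasDerivAt_besselJ {ν z : ℝ} (hν : 0 ≤ ν) (hz : 0 < z) :
    HasDerivAt (besselJ ν) (ν / z * besselJ ν z - besselJ (ν + 1) z) z := by
  have h1 : HasDerivAt (fun z : ℝ => z / 2) (1 / 2) z := (hasDerivAt_id z).div_const 2
  have h2 : HasDerivAt (fun z : ℝ => (z / 2) ^ ν) (1 / 2 * ν * (z / 2) ^ (ν - 1)) z :=
    h1.rpow_const (Or.inl (by positivity))
  have h3 : HasDerivAt (fun z : ℝ => besselEntire ν ((z / 2) ^ 2))
      (-besselEntire (ν + 1) ((z / 2) ^ 2) * (z / 2)) z := by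
    have h4 : HasDerivAt (fun z : ℝ => (z / 2) ^ 2) (z / 2) z := by
      refine (h1.pow 2).congr_deriv ?_
      push_cast
      ring
    exact (hasDerivAt_besselEntire hν _).comp z h4
  have h5 := h2.mul h3
  have heq : besselJ ν =ᶠ[𝓝 z] fun z => (z / 2) ^ ν * besselEntire ν ((z / 2) ^ 2) := by
    filter_upwards [lt_mem_nhds hz] with y hy using besselJ_eq_rpow_mul ν hy
  refine (h5.congr_of_eventuallyEq heq).congr_deriv ?_
  rw [besselJ_eq_rpow_mul ν hz, besselJ_eq_rpow_mul (ν + 1) hz,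
    Real.rpow_add_one (by positivity), Real.rpow_sub_one (by positivity)]
  field_simp
  ring

theorem besselJ_recurrence {ν z : ℝ} (hν : 0 ≤ ν) (hz : 0 < z) :
    z * besselJ ν z + z * besselJ (ν + 2) z = 2 * (ν + 1) * besselJ (ν + 1) z := by
  have h2 : (z / 2) ^ (ν + 2) = (z / 2) ^ ν * (z / 2) ^ 2 := by
    rw [Real.rpow_add (by positivity), Real.rpow_two]
  rw [besselJ_eq_rpow_mul ν hz, besselJ_eq_rpow_mul (ν + 1) hz, besselJ_eq_rpow_mul (ν + 2) hz,
    Real.rpow_add_one (by positivity), h2, besselEntire_recurrence hν]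
  ring

/-- The function `z J_ν'(z)`, written without derivatives. -/
noncomputable def besselD (ν z : ℝ) : ℝ := ν * besselJ ν z - z * besselJ (ν + 1) z

theorem besselD_eq {ν z : ℝ} (hν : 0 ≤ ν) (hz : 0 < z) :
    besselD ν z = z * deriv (besselJ ν) z := by
  rw [(hasDerivAt_besselJ hν hz).deriv, besselD]
  field_simp

theorem besselD_eq_zero_iff {ν z : ℝ} (hν : 0 ≤ ν) (hz : 0 < z) :
    besselD ν z = 0 ↔ deriv (besselJ ν) z = 0 := by
  rw [besselD_eq hν hz, mul_eq_zero, or_iff_right hz.ne']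

theorem besselD_succ {ν z : ℝ} (hν : 0 ≤ ν) (hz : 0 < z) :
    besselD (ν + 1) z = z * besselJ ν z - (ν + 1) * besselJ (ν + 1) z := by
  have := besselJ_recurrence hν hz
  rw [besselD, show ν + 1 + 1 = ν + 2 by ring]
  linarith

theorem hasDerivAt_besselJ_succ {ν z : ℝ} (hν : 0 ≤ ν) (hz : 0 < z) :
    HasDerivAt (besselJ (ν + 1)) (besselJ ν z - (ν + 1) / z * besselJ (ν + 1) z) z := by
  refine (hasDerivAt_besselJ (by positivity : 0 ≤ ν + 1) hz).congr_deriv ?_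
  have := besselD_succ hν hz
  rw [besselD] at this
  field_simp
  linarith

/-- Bessel's differential equation. -/
theorem hasDerivAt_besselD {ν z : ℝ} (hν : 0 ≤ ν) (hz : 0 < z) :
    HasDerivAt (besselD ν) ((ν ^ 2 - z ^ 2) / z * besselJ ν z) z := by
  have h := ((hasDerivAt_besselJ hν hz).const_mul ν).sub
    ((hasDerivAt_id z).mul (hasDerivAt_besselJ_succ hν hz))
  refine h.congr_deriv ?_
  simp only [id]
  field_simp
  ring

theorem continuousOn_besselD {ν : ℝ} (hν : 0 ≤ ν) : ContinuousOn (besselD ν) (Ioi 0) :=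
  fun _ hz => (hasDerivAt_besselD hν hz).continuousAt.continuousWithinAt

theorem continuousOn_besselJ {ν : ℝ} (hν : 0 ≤ ν) : ContinuousOn (besselJ ν) (Ioi 0) :=
  fun _ hz => (hasDerivAt_besselJ hν hz).continuousAt.continuousWithinAt

/-! ### Behaviour near the origin -/

theorem eventually_besselJ_pos {ν : ℝ} (hν : 0 ≤ ν) : ∀ᶠ z in 𝓝[>] 0, 0 < besselJ ν z := by
  have hc : Continuous fun z : ℝ => besselEntire ν ((z / 2) ^ 2) :=
    (continuous_besselEntire hν).comp (by fun_prop)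
  have h0 : 0 < besselEntire ν (((0 : ℝ) / 2) ^ 2) := by simpa using besselEntire_zero_pos hν
  filter_upwards [(hc.continuousAt.eventually (lt_mem_nhds h0)).filter_mono nhdsWithin_le_nhds,
    self_mem_nhdsWithin] with z hz hz0
  rw [besselJ_eq_rpow_mul ν hz0]
  exact mul_pos (Real.rpow_pos_of_pos (half_pos hz0) _) hz

theorem eventually_besselD_pos {ν : ℝ} (hν : 0 < ν) : ∀ᶠ z in 𝓝[>] 0, 0 < besselD ν z := by
  have hc : Continuous fun z : ℝ => ν * besselEntire ν ((z / 2) ^ 2)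
      - z * (z / 2) * besselEntire (ν + 1) ((z / 2) ^ 2) :=
    (continuous_const.mul ((continuous_besselEntire hν.le).comp (by fun_prop))).sub
      (Continuous.mul (by fun_prop)
        ((continuous_besselEntire (by positivity : 0 ≤ ν + 1)).comp (by fun_prop)))
  have h0 : 0 < ν * besselEntire ν (((0 : ℝ) / 2) ^ 2)
      - 0 * (0 / 2) * besselEntire (ν + 1) (((0 : ℝ) / 2) ^ 2) := by
    simpa using mul_pos hν (besselEntire_zero_pos hν.le)
  filter_upwards [(hc.continuousAt.eventually (lt_mem_nhds h0)).filter_mono nhdsWithin_le_nhds,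
    self_mem_nhdsWithin] with z hz hz0
  rw [besselD, besselJ_eq_rpow_mul ν hz0, besselJ_eq_rpow_mul (ν + 1) hz0,
    Real.rpow_add_one (half_pos hz0).ne']
  have := mul_pos (Real.rpow_pos_of_pos (half_pos hz0) ν) hz
  linarith

/-- `J_ν` and `J_ν'` are positive on `(0, ν]`. -/
theorem besselJ_pos_and_besselD_pos {ν z : ℝ} (hν : 0 < ν) (hz : 0 < z) (hzν : z ≤ ν) :
    0 < besselJ ν z ∧ 0 < besselD ν z := by
  obtain ⟨w, ⟨hwJ, hwD⟩, hw0, hwz⟩ := ((eventually_besselJ_pos hν.le).and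
    (eventually_besselD_pos hν)).and (Ioo_mem_nhdsGT hz) |>.exists
  have hd (y : ℝ) (hy : 0 < y) : HasDerivAt (fun x => besselJ ν x * besselD ν x)
      ((besselD ν y) ^ 2 / y + (ν ^ 2 - y ^ 2) / y * (besselJ ν y) ^ 2) y := by
    refine ((hasDerivAt_besselJ hν.le hy).mul (hasDerivAt_besselD hν.le hy)).congr_deriv ?_
    rw [besselD]
    field_simp
  have hmono : MonotoneOn (fun x => besselJ ν x * besselD ν x) (Icc w z) := by
    refine monotoneOn_of_deriv_nonneg (convex_Icc w z)
      (fun y hy => (hd y (hw0.trans_le hy.1)).continuousAt.continuousWithinAt) (fun y hy => ?_)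
      (fun y hy => ?_) <;> rw [interior_Icc] at hy
    · exact (hd y (hw0.trans hy.1)).differentiableAt.differentiableWithinAt
    · have hy0 : 0 < y := hw0.trans hy.1
      rw [(hd y hy0).deriv]
      have : 0 ≤ ν ^ 2 - y ^ 2 := by nlinarith [hy.2]
      positivity
  have hp (y : ℝ) (hy : y ∈ Icc w z) : 0 < besselJ ν y * besselD ν y :=
    (mul_pos hwJ hwD).trans_le (hmono ⟨le_rfl, hwz.le⟩ hy hy.1)
  have hsub : Icc w z ⊆ Ioi 0 := fun y hy => hw0.trans_le hy.1
  have hJ : 0 < besselJ ν z := by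
    rcases pos_or_neg_of_ne_zero isPreconnected_Icc ((continuousOn_besselJ hν.le).mono hsub)
      (fun y hy => (left_ne_zero_of_mul (hp y hy).ne')) with h | h
    · exact h z ⟨hwz.le, le_rfl⟩
    · exact absurd (h w ⟨le_rfl, hwz.le⟩) hwJ.le.not_gt
  exact ⟨hJ, (pos_iff_pos_of_mul_pos (hp z ⟨hwz.le, le_rfl⟩)).1 hJ⟩

theorem lt_of_besselD_eq_zero {ν z : ℝ} (hz : 0 < z) (h : besselD ν z = 0) :
    ν < z := by
  by_contra! hc
  exact h.not_gt (besselJ_pos_and_besselD_pos (hz.trans_le hc) hz hc).2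

/-- Bessel functions of consecutive orders have no common positive zero. -/
theorem besselJ_sq_add_sq_pos {ν z : ℝ} (hν : 0 ≤ ν) (hz : 0 < z) :
    0 < besselJ ν z ^ 2 + besselJ (ν + 1) z ^ 2 := by
  obtain ⟨w, hwJ, hw0, hwz⟩ := ((eventually_besselJ_pos hν).and (Ioo_mem_nhdsGT hz)).exists
  have hd (y : ℝ) (hy : 0 < y) : HasDerivAt
      (fun x => x ^ (2 * (ν + 1)) * (besselJ ν x ^ 2 + besselJ (ν + 1) x ^ 2))
      (y ^ (2 * (ν + 1)) * (2 * (2 * ν + 1) / y * besselJ ν y ^ 2)) y := by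
    refine ((Real.hasDerivAt_rpow_const (Or.inl hy.ne')).mul (((hasDerivAt_besselJ hν hy).pow 2).add
      ((hasDerivAt_besselJ_succ hν hy).pow 2))).congr_deriv ?_
    rw [Real.rpow_sub_one hy.ne']
    simp only [Pi.add_apply, Pi.pow_apply]
    field_simp
    ring
  have hmono : MonotoneOn
      (fun x => x ^ (2 * (ν + 1)) * (besselJ ν x ^ 2 + besselJ (ν + 1) x ^ 2)) (Icc w z) := by
    refine monotoneOn_of_deriv_nonneg (convex_Icc w z)
      (fun y hy => (hd y (hw0.trans_le hy.1)).continuousAt.continuousWithinAt) (fun y hy => ?_)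
      (fun y hy => ?_) <;> rw [interior_Icc] at hy
    · exact (hd y (hw0.trans hy.1)).differentiableAt.differentiableWithinAt
    · have hy0 : 0 < y := hw0.trans hy.1
      rw [(hd y hy0).deriv]
      positivity
  have h1 := hmono ⟨le_rfl, hwz.le⟩ ⟨hwz.le, le_rfl⟩ hwz.le
  have h2 : 0 < w ^ (2 * (ν + 1)) * (besselJ ν w ^ 2 + besselJ (ν + 1) w ^ 2) := by positivity
  exact pos_of_mul_pos_right (h2.trans_le h1) (by positivity)

/-! ### Rotation of the pair `(J_ν', J_{ν+1}')` -/

theorem deriv_besselD_mul_besselD_succ_neg {ν z : ℝ} (hν : 0 ≤ ν) (hz : 0 < z)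
    (h : besselD ν z = 0) :
    (ν ^ 2 - z ^ 2) / z * besselJ ν z * besselD (ν + 1) z < 0 := by
  have hνz := lt_of_besselD_eq_zero hz h
  have hneg : (ν ^ 2 - z ^ 2) / z < 0 := div_neg_of_neg_of_pos (by nlinarith) hz
  have hs := besselD_succ hν hz
  rw [besselD] at h
  suffices 0 < besselJ ν z * besselD (ν + 1) z by
    rw [mul_assoc]; exact mul_neg_of_neg_of_pos hneg this
  rcases le_or_gt z (ν + 1) with hc | hc
  · obtain ⟨h1, h2⟩ := besselJ_pos_and_besselD_pos (by positivity : 0 < ν + 1) hz hc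
    refine mul_pos ?_ h2
    have : 0 < z * besselJ ν z := by
      have := mul_pos (by positivity : 0 < ν + 1) h1
      linarith
    exact pos_of_mul_pos_right this hz.le
  · have hv : besselJ (ν + 1) z = ν / z * besselJ ν z := by field_simp; linarith
    have hE := besselJ_sq_add_sq_pos hν hz
    have hu : besselJ ν z ≠ 0 := by
      intro hu
      rw [hv, hu] at hE
      simp at hE
    have : besselJ ν z * besselD (ν + 1) z = besselJ ν z ^ 2 * (z ^ 2 - ν * (ν + 1)) / z := by
      rw [hs, hv]; field_simp
    rw [this]
    have : 0 < z ^ 2 - ν * (ν + 1) := by nlinarith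
    positivity

theorem deriv_besselD_succ_mul_besselD_pos {ν z : ℝ} (hν : 0 ≤ ν) (hz : 0 < z)
    (h : besselD (ν + 1) z = 0) :
    0 < ((ν + 1) ^ 2 - z ^ 2) / z * besselJ (ν + 1) z * besselD ν z := by
  have hνz := lt_of_besselD_eq_zero hz h
  have hneg : ((ν + 1) ^ 2 - z ^ 2) / z < 0 := div_neg_of_neg_of_pos (by nlinarith) hz
  rw [besselD_succ hν hz] at h
  have hu : besselJ ν z = (ν + 1) / z * besselJ (ν + 1) z := by field_simp; linarith
  have hE := besselJ_sq_add_sq_pos hν hz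
  have hv : besselJ (ν + 1) z ≠ 0 := by
    intro hv
    rw [hu, hv] at hE
    simp at hE
  have : besselJ (ν + 1) z * besselD ν z
      = -(besselJ (ν + 1) z ^ 2 * (z ^ 2 - ν * (ν + 1)) / z) := by
    rw [besselD, hu]; field_simp; ring
  rw [mul_assoc, this]
  have : 0 < z ^ 2 - ν * (ν + 1) := by nlinarith
  exact mul_pos_of_neg_of_neg hneg (neg_neg_of_pos (by positivity))

/-! ### Interlacing of the zeroes -/

theorem continuousOn_besselD_Icc {ν p q : ℝ} (hν : 0 ≤ ν) (hp : 0 < p) :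
    ContinuousOn (besselD ν) (Icc p q) :=
  (continuousOn_besselD hν).mono fun _ hz => hp.trans_le hz.1

/-- Between consecutive positive zeroes of `J_ν'` lies a zero of `J_{ν+1}'`. -/
theorem exists_besselD_succ_zero_between {ν p q : ℝ} (hν : 0 ≤ ν) (hp0 : 0 < p) (hpq : p < q)
    (hp : besselD ν p = 0) (hq : besselD ν q = 0) (h0 : ∀ z ∈ Ioo p q, besselD ν z ≠ 0) :
    ∃ z ∈ Ioo p q, besselD (ν + 1) z = 0 :=
  exists_zero_between_of_deriv_mul_neg hpq (continuousOn_besselD_Icc hν hp0)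
    (continuousOn_besselD_Icc (by positivity) hp0) (hasDerivAt_besselD hν hp0)
    (hasDerivAt_besselD hν (hp0.trans hpq)) hp hq h0
    (deriv_besselD_mul_besselD_succ_neg hν hp0 hp)
    (deriv_besselD_mul_besselD_succ_neg hν (hp0.trans hpq) hq)

/-- Between consecutive positive zeroes of `J_{ν+1}'` lies a zero of `J_ν'`. -/
theorem exists_besselD_zero_between {ν p q : ℝ} (hν : 0 ≤ ν) (hp0 : 0 < p) (hpq : p < q)
    (hp : besselD (ν + 1) p = 0) (hq : besselD (ν + 1) q = 0)
    (h0 : ∀ z ∈ Ioo p q, besselD (ν + 1) z ≠ 0) :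
    ∃ z ∈ Ioo p q, besselD ν z = 0 := by
  have hν1 : 0 ≤ ν + 1 := by positivity
  have h1 := deriv_besselD_succ_mul_besselD_pos hν hp0 hp
  have h2 := deriv_besselD_succ_mul_besselD_pos hν (hp0.trans hpq) hq
  obtain ⟨z, hz, hz0⟩ := exists_zero_between_of_deriv_mul_neg (g := fun z => -besselD ν z) hpq
    (continuousOn_besselD_Icc hν1 hp0) (continuousOn_besselD_Icc hν hp0).neg
    (hasDerivAt_besselD hν1 hp0) (hasDerivAt_besselD hν1 (hp0.trans hpq)) hp hq h0
    (by linarith) (by linarith)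
  exact ⟨z, hz, neg_eq_zero.1 hz0⟩

/-- A positive zero of `J_{ν+1}'` with no smaller one is preceded by a zero of `J_ν'`. -/
theorem exists_besselD_zero_lt {ν q : ℝ} (hν : 0 < ν) (hq0 : 0 < q)
    (hq : besselD (ν + 1) q = 0) (h0 : ∀ z ∈ Ioo 0 q, besselD (ν + 1) z ≠ 0) :
    ∃ z ∈ Ioo 0 q, besselD ν z = 0 := by
  have hν1 : 0 ≤ ν + 1 := by positivity
  have hqν : ν + 1 < q := lt_of_besselD_eq_zero hq0 hq
  have hpos : ∀ z ∈ Ioo 0 q, 0 < besselD (ν + 1) z := by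
    rcases pos_or_neg_of_ne_zero isPreconnected_Ioo
      ((continuousOn_besselD hν1).mono fun z hz => hz.1) h0 with h | h
    · exact h
    · exact absurd (h (ν + 1) ⟨by positivity, hqν⟩)
        (besselJ_pos_and_besselD_pos (by positivity) (by positivity) le_rfl).2.le.not_gt
  have hd := (hasDerivAt_besselD hν1 hq0).nonpos_of_pos_left hq0 hq hpos
  have hneg : besselD ν q < 0 := by
    have := deriv_besselD_succ_mul_besselD_pos hν.le hq0 hq
    by_contra! hc
    exact this.not_ge (mul_nonpos_of_nonpos_of_nonneg hd hc)
  obtain ⟨z, hz, hz0⟩ := intermediate_value_Ioo' (by linarith : ν ≤ q)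
    (continuousOn_besselD_Icc hν.le hν)
    ⟨hneg, (besselJ_pos_and_besselD_pos hν hν le_rfl).2⟩
  exact ⟨z, ⟨hν.trans hz.1, hz.2⟩, hz0⟩

/-- The first positive zero of `J_0'` is preceded by a zero of `J_1'`. -/
theorem exists_besselD_one_zero_lt {q : ℝ} (hq0 : 0 < q) (hq : besselD 0 q = 0)
    (h0 : ∀ z ∈ Ioo 0 q, besselD 0 z ≠ 0) : ∃ z ∈ Ioo 0 q, besselD (0 + 1) z = 0 := by
  have hneg : ∀ z ∈ Ioo 0 q, 0 < (-besselD 0) z := by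
    obtain ⟨w, hwJ, hw⟩ := ((eventually_besselJ_pos (by norm_num : (0 : ℝ) ≤ 0 + 1)).and
      (Ioo_mem_nhdsGT hq0)).exists
    have hwD : besselD 0 w < 0 := by
      rw [besselD]; linarith [mul_pos hw.1 hwJ]
    rcases pos_or_neg_of_ne_zero isPreconnected_Ioo
      ((continuousOn_besselD le_rfl).mono fun z hz => hz.1) h0 with h | h
    · exact absurd (h w hw) hwD.le.not_gt
    · exact fun z hz => neg_pos.2 (h z hz)
  have hd := (hasDerivAt_besselD le_rfl hq0).neg.nonpos_of_pos_left hq0 (by simp [hq]) hneg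
  have hD1 : besselD (0 + 1) q < 0 := by
    have := deriv_besselD_mul_besselD_succ_neg le_rfl hq0 hq
    by_contra! hc
    exact this.not_ge (mul_nonneg (neg_nonpos.1 hd) hc)
  obtain ⟨w, hwD, hw⟩ := ((eventually_besselD_pos (by norm_num : (0 : ℝ) < 0 + 1)).and
    (Ioo_mem_nhdsGT hq0)).exists
  obtain ⟨z, hz, hz0⟩ := intermediate_value_Ioo' hw.2.le
    (continuousOn_besselD_Icc (by norm_num) hw.1) ⟨hD1, hwD⟩
  exact ⟨z, ⟨hw.1.trans hz.1, hz.2⟩, hz0⟩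

namespace EnumBesselJDerivZeros

variable {ν : ℝ} {x : ℕ → ℝ}

theorem lt_iff (h : EnumBesselJDerivZeros ν x) {i j : ℕ} (hi : 1 ≤ i) (hj : 1 ≤ j) :
    x i < x j ↔ i < j := h.1.lt_iff_lt hi hj

theorem nonneg (h : EnumBesselJDerivZeros ν x) {k : ℕ} (hk : 1 ≤ k) : 0 ≤ x k :=
  (h.2.1 k hk).1.elim le_of_lt fun h => h.2.ge

theorem pos_of_two_le (h : EnumBesselJDerivZeros ν x) {k : ℕ} (hk : 2 ≤ k) : 0 < x k :=
  (h.nonneg le_rfl).trans_lt ((h.lt_iff le_rfl (by lia)).2 (by lia))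

theorem pos_of_pos (h : EnumBesselJDerivZeros ν x) (hν : 0 < ν) {k : ℕ} (hk : 1 ≤ k) : 0 < x k :=
  (h.2.1 k hk).1.elim id fun h => absurd h.1 hν.ne'

theorem besselD_eq_zero (h : EnumBesselJDerivZeros ν x) (hν : 0 ≤ ν) {k : ℕ} (hk : 1 ≤ k)
    (h0 : 0 < x k) : besselD ν (x k) = 0 :=
  (besselD_eq_zero_iff hν h0).2 (h.2.1 k hk).2

theorem exists_eq (h : EnumBesselJDerivZeros ν x) (hν : 0 ≤ ν) {z : ℝ} (hz : 0 < z)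
    (hD : besselD ν z = 0) : ∃ k, 1 ≤ k ∧ x k = z :=
  h.2.2 z ⟨Or.inl hz, (besselD_eq_zero_iff hν hz).1 hD⟩

theorem besselD_ne_zero (h : EnumBesselJDerivZeros ν x) (hν : 0 ≤ ν) {k : ℕ} (hk : 1 ≤ k) :
    ∀ z ∈ Ioo (x k) (x (k + 1)), besselD ν z ≠ 0 := by
  intro z hz hD
  obtain ⟨j, hj, rfl⟩ := h.exists_eq hν ((h.nonneg hk).trans_lt hz.1) hD
  have h1 := (h.lt_iff hk hj).1 hz.1
  have h2 := (h.lt_iff hj (by lia)).1 hz.2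
  lia

theorem besselD_ne_zero_of_lt_one (h : EnumBesselJDerivZeros ν x) (hν : 0 ≤ ν) :
    ∀ z ∈ Ioo 0 (x 1), besselD ν z ≠ 0 := by
  intro z hz hD
  obtain ⟨j, hj, rfl⟩ := h.exists_eq hν hz.1 hD
  have h2 := (h.lt_iff hj le_rfl).1 hz.2
  lia

theorem one_eq_zero (h : EnumBesselJDerivZeros 0 x) : x 1 = 0 := by
  obtain ⟨k, hk, hk0⟩ := h.2.2 0 ⟨Or.inr ⟨rfl, rfl⟩, deriv_besselJ_zero_zero⟩
  exact le_antisymm (hk0 ▸ (h.1.le_iff_le (mem_Ici.2 le_rfl) hk).2 hk) (h.nonneg le_rfl)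

/-- `j'_{ν,k} < j'_{ν+1,k} < j'_{ν,k+1}` for `ν ≥ 0` and `k ≥ 1`. -/
theorem interlace {y : ℕ → ℝ} (hx : EnumBesselJDerivZeros ν x)
    (hy : EnumBesselJDerivZeros (ν + 1) y) (hν : 0 ≤ ν) {k : ℕ} (hk : 1 ≤ k) :
    x k < y k ∧ y k < x (k + 1) := by
  have hν1 : 0 < ν + 1 := by positivity
  have hypos {j : ℕ} (hj : 1 ≤ j) : 0 < y j := hy.pos_of_pos hν1 hj
  have hyD {j : ℕ} (hj : 1 ≤ j) : besselD (ν + 1) (y j) = 0 :=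
    hy.besselD_eq_zero hν1.le hj (hypos hj)
  have hstep {j : ℕ} (hj : 1 ≤ j) (hj0 : 0 < x j) :
      ∃ i, 1 ≤ i ∧ x j < y i ∧ y i < x (j + 1) := by
    have hlt : x j < x (j + 1) := (hx.lt_iff hj (by lia)).2 (by lia)
    obtain ⟨z, hz, hD⟩ := exists_besselD_succ_zero_between hν hj0 hlt
      (hx.besselD_eq_zero hν hj hj0) (hx.besselD_eq_zero hν (by lia) (hj0.trans hlt))
      (hx.besselD_ne_zero hν hj)
    obtain ⟨i, hi, rfl⟩ := hy.exists_eq hν1.le (hj0.trans hz.1) hD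
    exact ⟨i, hi, hz⟩
  have hymono {i j : ℕ} (hi : 1 ≤ i) (hij : i ≤ j) : y i ≤ y j :=
    (hy.1.le_iff_le (mem_Ici.2 hi) (mem_Ici.2 (hi.trans hij))).2 hij
  have hxmono {i j : ℕ} (hi : 1 ≤ i) (hij : i ≤ j) : x i ≤ x j :=
    (hx.1.le_iff_le (mem_Ici.2 hi) (mem_Ici.2 (hi.trans hij))).2 hij
  induction k, hk using Nat.le_induction with
  | base =>
    rcases hν.eq_or_lt with rfl | hνpos
    · refine ⟨hx.one_eq_zero ▸ hypos le_rfl, ?_⟩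
      have h2 : 0 < x 2 := hx.pos_of_two_le le_rfl
      obtain ⟨z, hz, hD⟩ := exists_besselD_one_zero_lt h2
        (hx.besselD_eq_zero le_rfl (by lia) h2)
        (by simpa [hx.one_eq_zero] using hx.besselD_ne_zero le_rfl (le_refl 1))
      obtain ⟨i, hi, rfl⟩ := hy.exists_eq hν1.le hz.1 hD
      exact (hymono le_rfl hi).trans_lt hz.2
    · constructor
      · obtain ⟨z, hz, hD⟩ := exists_besselD_zero_lt hνpos (hypos le_rfl) (hyD le_rfl)
          (hy.besselD_ne_zero_of_lt_one hν1.le)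
        obtain ⟨i, hi, rfl⟩ := hx.exists_eq hν hz.1 hD
        exact (hxmono le_rfl hi).trans_lt hz.2
      · obtain ⟨i, hi, -, hlt⟩ := hstep le_rfl (hx.pos_of_pos hνpos le_rfl)
        exact (hymono le_rfl hi).trans_lt hlt
  | succ k hk ih =>
    constructor
    · obtain ⟨z, hz, hD⟩ := exists_besselD_zero_between hν (hypos hk)
        ((hy.lt_iff hk (by lia)).2 k.lt_succ_self) (hyD hk) (hyD (by lia))
        (hy.besselD_ne_zero hν1.le hk)
      obtain ⟨i, hi, rfl⟩ := hx.exists_eq hν ((hypos hk).trans hz.1) hD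
      have := (hx.lt_iff hk hi).1 (ih.1.trans hz.1)
      exact (hxmono (by lia) this).trans_lt hz.2
    · obtain ⟨i, hi, hlt, hlt'⟩ := hstep (by lia : 1 ≤ k + 1) (hx.pos_of_two_le (by lia))
      have := (hy.lt_iff hk hi).1 (ih.2.trans hlt)
      exact (hymono (by lia) this).trans_lt hlt'

end EnumBesselJDerivZeros

/-- For `ν ≥ 1` and every `k ≥ 1`, `j′_{ν,k+1} < j′_{ν−1,k+2} < j′_{ν,k+2}`, where `j′_{μ,k}` is
the `k`-th positive zero of `J_μ′`, with the convention `j′_{0,1} = 0` for the order `μ = 0`. -/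
theorem stmt19 (ν : ℝ) (hν : 1 ≤ ν) (k : ℕ) (hk : 1 ≤ k)
    (jpm1 jpn : ℕ → ℝ)
    (hjpm1 : EnumBesselJDerivZeros (ν - 1) jpm1)
    (hjpn : EnumBesselJDerivZeros ν jpn) :
    jpn (k + 1) < jpm1 (k + 2) ∧ jpm1 (k + 2) < jpn (k + 2) := by
  have hν0 : 0 ≤ ν - 1 := sub_nonneg.2 hν
  have hjpn' : EnumBesselJDerivZeros (ν - 1 + 1) jpn := by rwa [sub_add_cancel]
  exact ⟨(hjpm1.interlace hjpn' hν0 (by lia : 1 ≤ k + 1)).2,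
    (hjpm1.interlace hjpn' hν0 (by lia : 1 ≤ k + 2)).1⟩
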